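/- Let 0 ≤ c < 1 and let b ∈ ℝ³ with ‖b‖ < 1. Set ρ_B = (1/2)(I₂ + Σᵢ bᵢσᵢ), let S be the positive semidefinite square root of 2ρ_B, and define ρ = (I₂⊗S)·ρ̃ᵐᵃˣ_c·(I₂⊗S). Then ρ is a two-qubit state whose second-qubit Bloch vector equals b and whose first-qubit Bloch vector a satisfies ‖a‖ < 1, and with γ_a = 1/√(1−‖a‖²), γ_b = 1/√(1−‖b‖²), c_A = γ_b²(a − Tb), c_B = γ_a²(b − Tᵀa), the following hold: γ_b²(1 − ‖c_B‖) = γ_a²(1 − ‖c_A‖), and Bob's steering ellipsoid is also of maximal volume for its centre, i.e. γ_a⁴|det Θ(ρ)| = (1 − ‖c_B‖)². -/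

import Mathlib

open Matrix Kronecker Polynomial
open scoped ComplexOrder

noncomputable section

/-- The Pauli matrices: `pauli 0 = I₂`, `pauli 1 = σ₁`, `pauli 2 = σ₂`, `pauli 3 = σ₃`. -/
def pauli : Fin 4 → Matrix (Fin 2) (Fin 2) ℂ
  | 0 => !![1, 0; 0, 1]
  | 1 => !![0, 1; 1, 0]
  | 2 => !![0, -Complex.I; Complex.I, 0]
  | 3 => !![1, 0; 0, -1]

/-- Euclidean norm of a vector in ℝ³. -/
def norm3 (v : Fin 3 → ℝ) : ℝ := Real.sqrt (∑ i, v i ^ 2)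

/-- The canonical axis-aligned two-qubit operator with steering-ellipsoid centre `c`
and signed semiaxes `t`:
`ρ̃(c,t) = (1/4)(I₄ + Σᵢ cᵢ (σᵢ⊗σ₀) + Σᵢ tᵢ (σᵢ⊗σᵢ))`. -/
def rhoTilde (c t : Fin 3 → ℝ) : Matrix (Fin 2 × Fin 2) (Fin 2 × Fin 2) ℂ :=
  (1 / 4 : ℂ) • ((1 : Matrix (Fin 2 × Fin 2) (Fin 2 × Fin 2) ℂ)
    + ∑ i : Fin 3, (c i : ℂ) • (pauli i.succ ⊗ₖ pauli 0)
    + ∑ i : Fin 3, (t i : ℂ) • (pauli i.succ ⊗ₖ pauli i.succ))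

/-- The vector `|ψ_c⟩ = (|01⟩ + √(1−c)|10⟩)/√(2−c)` in the computational basis. -/
def psiC (c : ℝ) : Fin 2 × Fin 2 → ℂ := fun p =>
  if p = (0, 1) then ((1 : ℝ) / Real.sqrt (2 - c) : ℝ)
  else if p = (1, 0) then (Real.sqrt (1 - c) / Real.sqrt (2 - c) : ℝ)
  else 0

/-- The vector `|00⟩` in the computational basis. -/
def ket00 : Fin 2 × Fin 2 → ℂ := fun p => if p = (0, 0) then 1 else 0

/-- The maximal-volume state `ρ̃ᵐᵃˣ_c = (1 − c/2)|ψ_c⟩⟨ψ_c| + (c/2)|00⟩⟨00|`. -/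
def rhoMax (c : ℝ) : Matrix (Fin 2 × Fin 2) (Fin 2 × Fin 2) ℂ :=
  ((1 - c / 2 : ℝ) : ℂ) • Matrix.vecMulVec (psiC c) (star (psiC c))
  + ((c / 2 : ℝ) : ℂ) • Matrix.vecMulVec ket00 (star ket00)

/-- The Pauli-basis expansion matrix `Θ(ρ)_{μν} = Re tr(ρ (σ_μ ⊗ σ_ν))`. -/
def Theta (ρ : Matrix (Fin 2 × Fin 2) (Fin 2 × Fin 2) ℂ) : Matrix (Fin 4) (Fin 4) ℝ :=
  Matrix.of fun μ ν => ((ρ * (pauli μ ⊗ₖ pauli ν)).trace).re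

/-!
In Pauli coordinates the determinant of a Hermitian `2 × 2` matrix is the Minkowski form `η`, so a
local filter `S` on Bob's side turns `R = Θ(ρ)` into `R Λᵀ`, where `Λ η Λᵀ = Λᵀ η Λ = |det S|² η`.
When `R 0 0 = 1`, the first column of the Gram matrix `R η Rᵀ` holds `1 - ‖b‖²` and `a - T b`, i.e.
the centre of Alice's ellipsoid; Bob's is read off `Rᵀ η R` in the same way.

For the maximal-volume state both Gram matrices have the form `q η + p m mᵀ` with `m` null and with
the same `q = 1 - c`. Filtering preserves this form and scales both values of `q` by `|det S|²`.
As `m` is null, the form yields `1 - ‖c_A‖ = γ_b² q`, `1 - ‖c_B‖ = γ_a² q` and, by the matrix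
determinant lemma, `|det R| = q²`; both claims are immediate consequences.
-/

lemma eq_of_isSymm_of_dotProduct_mulVec_self {n K : Type*} [Fintype n] [Field K] [NeZero (2 : K)]
    {A B : Matrix n n K} (hA : A.IsSymm) (hB : B.IsSymm)
    (h : ∀ x, x ⬝ᵥ A *ᵥ x = x ⬝ᵥ B *ᵥ x) : A = B := by
  classical
  refine toBilin'.injective (LinearMap.BilinForm.ext_of_isSymm
    (isSymm_toBilin'_iff_isSymm.2 hA) (isSymm_toBilin'_iff_isSymm.2 hB) fun x => ?_)
  simpa only [toBilin'_apply'] using h x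

lemma mulVec_dotProduct_mulVec_mulVec {n R : Type*} [Fintype n] [CommSemiring R]
    (A B : Matrix n n R) (x : n → R) :
    (B *ᵥ x) ⬝ᵥ A *ᵥ (B *ᵥ x) = x ⬝ᵥ (Bᵀ * A * B) *ᵥ x := by
  rw [← mulVec_mulVec, ← mulVec_mulVec, dotProduct_mulVec x, vecMul_transpose]

section Norm3

variable (v : Fin 3 → ℝ)

lemma norm3_nonneg : 0 ≤ norm3 v := Real.sqrt_nonneg _

lemma norm3_sq : norm3 v ^ 2 = ∑ i, v i ^ 2 := Real.sq_sqrt (by positivity)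

lemma norm3_smul (t : ℝ) : norm3 (t • v) = |t| * norm3 v := by
  simp only [norm3, Pi.smul_apply, smul_eq_mul, mul_pow, ← Finset.mul_sum]
  rw [Real.sqrt_mul (sq_nonneg t), Real.sqrt_sq_eq_abs]

end Norm3

section Pauli

lemma pauli_zero : pauli 0 = 1 := one_fin_two.symm

lemma isHermitian_pauli (μ : Fin 4) : (pauli μ).IsHermitian := by
  fin_cases μ <;> ext i j <;> fin_cases i <;> fin_cases j <;> simp [pauli]

/-- The Hermitian matrix `∑ μ, x μ σ_μ` attached to a four-vector `x`. -/
def pauliVec (x : Fin 4 → ℝ) : Matrix (Fin 2) (Fin 2) ℂ := ∑ μ, (x μ : ℂ) • pauli μ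

/-- The coordinates `½ Re tr(X σ_μ)` of a Hermitian matrix `X` in the Pauli basis. -/
def pauliCoord (X : Matrix (Fin 2) (Fin 2) ℂ) : Fin 4 → ℝ :=
  fun μ => (X * pauli μ).trace.re / 2

lemma pauliVec_eq (x : Fin 4 → ℝ) :
    pauliVec x = !![(x 0 + x 3 : ℂ), x 1 - x 2 * Complex.I; x 1 + x 2 * Complex.I, x 0 - x 3] := by
  ext i j
  fin_cases i <;> fin_cases j <;> simp [pauliVec, pauli, Fin.sum_univ_four, sub_eq_add_neg]

lemma pauliVec_single (μ : Fin 4) : pauliVec (Pi.single μ 1) = pauli μ := by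
  simp [pauliVec, Pi.single_apply]

lemma pauliCoord_pauliVec (x : Fin 4 → ℝ) : pauliCoord (pauliVec x) = x := by
  ext μ
  fin_cases μ <;> 
    (simp [pauliCoord, pauliVec_eq, pauli, trace_fin_two]; try ring)

lemma pauliVec_pauliCoord {X : Matrix (Fin 2) (Fin 2) ℂ} (hX : X.IsHermitian) :
    pauliVec (pauliCoord X) = X := by
  have h00 := congrArg Complex.im (hX.apply 0 0)
  have h11 := congrArg Complex.im (hX.apply 1 1)
  have hre := congrArg Complex.re (hX.apply 0 1)
  have him := congrArg Complex.im (hX.apply 0 1)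
  simp only [RCLike.star_def, Complex.conj_re, Complex.conj_im] at h00 h11 hre him
  ext i j
  fin_cases i <;> fin_cases j <;> apply Complex.ext <;>
    simp [pauliCoord, pauliVec_eq, pauli, trace_fin_two, Matrix.mul_apply] <;> linarith

end Pauli

section Minkowski

/-- The Minkowski form `diag(1, -1, -1, -1)`, the polarisation of the determinant on Hermitian
`2 × 2` matrices in Pauli coordinates. -/
def minkowski : Matrix (Fin 4) (Fin 4) ℝ := diagonal ![1, -1, -1, -1]

lemma isSymm_minkowski : minkowski.IsSymm := isSymm_diagonal _

lemma minkowski_zero_zero : minkowski 0 0 = 1 := diagonal_apply_eq _ _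

lemma minkowski_succ_zero (i : Fin 3) : minkowski i.succ 0 = 0 :=
  diagonal_apply_ne _ i.succ_ne_zero

lemma det_minkowski : minkowski.det = -1 := by
  simp [minkowski, Fin.prod_univ_four]

lemma minkowski_mul_self : minkowski * minkowski = 1 := by
  rw [minkowski, diagonal_mul_diagonal, ← diagonal_one]
  congr 1
  ext μ
  fin_cases μ <;> simp

lemma dotProduct_minkowski_mulVec (x y : Fin 4 → ℝ) :
    x ⬝ᵥ minkowski *ᵥ y = x 0 * y 0 - ∑ i : Fin 3, x i.succ * y i.succ := by
  simp [minkowski, dotProduct, mulVec_diagonal, Fin.sum_univ_succ]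
  ring

lemma mul_minkowski_mul_transpose_apply (R : Matrix (Fin 4) (Fin 4) ℝ) (μ ν : Fin 4) :
    (R * minkowski * Rᵀ) μ ν = R μ 0 * R ν 0 - ∑ i : Fin 3, R μ i.succ * R ν i.succ := by
  rw [mul_mul_apply, transpose_transpose, dotProduct_minkowski_mulVec]

lemma isSymm_mul_minkowski_mul_transpose (R : Matrix (Fin 4) (Fin 4) ℝ) :
    (R * minkowski * Rᵀ).IsSymm := by
  simp only [IsSymm, transpose_mul, transpose_transpose, isSymm_minkowski.eq, Matrix.mul_assoc]

lemma det_pauliVec (x : Fin 4 → ℝ) : (pauliVec x).det = (x ⬝ᵥ minkowski *ᵥ x : ℝ) := by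
  rw [pauliVec_eq, det_fin_two_of, dotProduct_minkowski_mulVec, Fin.sum_univ_three]
  push_cast
  linear_combination (x 2 : ℂ) ^ 2 * Complex.I_sq

end Minkowski

section SpinorMap

variable (S : Matrix (Fin 2) (Fin 2) ℂ)

/-- The real `4 × 4` matrix of `X ↦ S X Sᴴ` on Hermitian matrices in the Pauli basis; for
`det S = 1` this is the covering homomorphism from `SL(2, ℂ)` to the Lorentz group. -/
def spinorMap : Matrix (Fin 4) (Fin 4) ℝ := of fun μ ν => pauliCoord (S * pauli ν * Sᴴ) μ

lemma pauliVec_spinorMap_mulVec (x : Fin 4 → ℝ) :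
    pauliVec (spinorMap S *ᵥ x) = S * pauliVec x * Sᴴ := by
  have hcol (ν : Fin 4) : ∑ μ, (spinorMap S μ ν : ℂ) • pauli μ = S * pauli ν * Sᴴ :=
    pauliVec_pauliCoord (isHermitian_mul_mul_conjTranspose S (isHermitian_pauli ν))
  simp only [pauliVec, mulVec, dotProduct, Complex.ofReal_sum, Complex.ofReal_mul,
    Finset.sum_smul, Matrix.mul_sum, Matrix.sum_mul, Matrix.mul_smul, Matrix.smul_mul, ← hcol,
    Finset.smul_sum, smul_smul]
  rw [Finset.sum_comm]
  simp only [mul_comm]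

lemma spinorMap_one : spinorMap 1 = 1 := by
  ext μ ν
  fin_cases μ <;> fin_cases ν <;>
    simp [spinorMap, pauliCoord, pauli, trace_fin_two]

lemma spinorMap_conjTranspose : spinorMap Sᴴ = (spinorMap S)ᵀ := by
  ext μ ν
  simp only [spinorMap, pauliCoord, of_apply, transpose_apply, conjTranspose_conjTranspose]
  rw [Matrix.mul_assoc, trace_mul_comm, ← Matrix.mul_assoc]

lemma conjTranspose_mul_pauli_mul (μ : Fin 4) :
    Sᴴ * pauli μ * S = pauliVec (spinorMap S μ) := by
  have h := pauliVec_spinorMap_mulVec Sᴴ (Pi.single μ 1)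
  rwa [pauliVec_single, conjTranspose_conjTranspose, spinorMap_conjTranspose, mulVec_single_one,
    eq_comm] at h

-- `det (S X Sᴴ) = |det S|² det X` is the equality of the quadratic forms of the two sides.
lemma spinorMap_transpose_mul_minkowski_mul :
    (spinorMap S)ᵀ * minkowski * spinorMap S = Complex.normSq S.det • minkowski := by
  have hsymm := isSymm_mul_minkowski_mul_transpose (spinorMap S)ᵀ
  rw [transpose_transpose] at hsymm
  refine eq_of_isSymm_of_dotProduct_mulVec_self hsymm (isSymm_minkowski.smul _) fun x => ?_
  have hdet := congrArg Matrix.det (pauliVec_spinorMap_mulVec S x)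
  rw [det_mul, det_mul, det_conjTranspose, det_pauliVec, det_pauliVec, mul_right_comm,
    RCLike.star_def, Complex.mul_conj] at hdet
  rw [smul_mulVec, dotProduct_smul, smul_eq_mul, ← mulVec_dotProduct_mulVec_mulVec]
  exact_mod_cast hdet

lemma spinorMap_mul_minkowski_mul_transpose :
    spinorMap S * minkowski * (spinorMap S)ᵀ = Complex.normSq S.det • minkowski := by
  have h := spinorMap_transpose_mul_minkowski_mul Sᴴ
  rwa [spinorMap_conjTranspose, transpose_transpose, det_conjTranspose, RCLike.star_def,
    Complex.normSq_conj] at h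

end SpinorMap

section Theta

variable (ρ : Matrix (Fin 2 × Fin 2) (Fin 2 × Fin 2) ℂ)

lemma re_trace_mul_kronecker_pauliVec (x y : Fin 4 → ℝ) :
    (ρ * (pauliVec x ⊗ₖ pauliVec y)).trace.re = x ⬝ᵥ Theta ρ *ᵥ y := by
  have hexp : (pauliVec x ⊗ₖ pauliVec y) =
      ∑ μ, ∑ ν, ((x μ * y ν : ℝ) : ℂ) • (pauli μ ⊗ₖ pauli ν) := by
    ext ⟨i, i'⟩ ⟨j, j'⟩
    simp only [pauliVec, kronecker_apply, Matrix.sum_apply, Matrix.smul_apply, smul_eq_mul,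
      Finset.sum_mul_sum, Complex.ofReal_mul]
    exact Finset.sum_congr rfl fun μ _ => Finset.sum_congr rfl fun ν _ => by ring
  simp only [hexp, Matrix.mul_smul, trace_sum, trace_smul, Complex.re_sum,
    smul_eq_mul, Complex.re_ofReal_mul, dotProduct, mulVec, Theta, of_apply, Finset.mul_sum]
  exact Finset.sum_congr rfl fun μ _ => Finset.sum_congr rfl fun ν _ => by ring

lemma Theta_kronecker_conj (A B : Matrix (Fin 2) (Fin 2) ℂ) :
    Theta ((A ⊗ₖ B) * ρ * (A ⊗ₖ B)ᴴ) = spinorMap A * Theta ρ * (spinorMap B)ᵀ := by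
  ext μ ν
  rw [mul_mul_apply, transpose_transpose, ← re_trace_mul_kronecker_pauliVec,
    ← conjTranspose_mul_pauli_mul, ← conjTranspose_mul_pauli_mul, mul_kronecker_mul,
    mul_kronecker_mul, ← conjTranspose_kronecker, Theta, of_apply, Matrix.mul_assoc,
    Matrix.mul_assoc, trace_mul_comm]
  simp only [Matrix.mul_assoc]

lemma trace_eq_Theta {ρ : Matrix (Fin 2 × Fin 2) (Fin 2 × Fin 2) ℂ} (hρ : ρ.IsHermitian) :
    ρ.trace = (Theta ρ 0 0 : ℂ) := by
  have him : star ρ.trace = ρ.trace := by rw [← trace_conjTranspose, hρ.eq]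
  simpa [Theta, pauli_zero] using (Complex.conj_eq_iff_re.1 him).symm

end Theta

section SteeringEllipsoid

/-- The Lorentz factor `γ = 1 / √(1 - ‖v‖²)` of a Bloch vector; its value is `0` once `1 ≤ ‖v‖`. -/
def lorentzFactor (v : Fin 3 → ℝ) : ℝ := 1 / √(1 - norm3 v ^ 2)

/-- Bob's Bloch vector, read off a matrix `R = Θ(ρ)`; Alice's is that of `Rᵀ`. -/
def bloch (R : Matrix (Fin 4) (Fin 4) ℝ) : Fin 3 → ℝ := fun j => R 0 j.succ

/-- The centre `γ_b² (a - T b)` of Alice's steering ellipsoid, read off a matrix `R = Θ(ρ)`;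
Bob's is that of `Rᵀ`. -/
def ellipsoidCentre (R : Matrix (Fin 4) (Fin 4) ℝ) : Fin 3 → ℝ :=
  fun i => lorentzFactor (bloch R) ^ 2 * (bloch Rᵀ i - ∑ j : Fin 3, R i.succ j.succ * bloch R j)

/-- `R η Rᵀ = q η + p m mᵀ` for the Minkowski form `η`, some null vector `m` and some `p ≥ 0`.
For `R = Θ(ρ)` this forces Alice's steering ellipsoid to be of maximal volume for its centre. -/
def HasNullGram (R : Matrix (Fin 4) (Fin 4) ℝ) (q : ℝ) : Prop :=
  ∃ p : ℝ, 0 ≤ p ∧ ∃ m : Fin 4 → ℝ, m ⬝ᵥ minkowski *ᵥ m = 0 ∧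
    R * minkowski * Rᵀ = q • minkowski + p • vecMulVec m m

variable {R Λ : Matrix (Fin 4) (Fin 4) ℝ} {k q : ℝ}

lemma lorentzFactor_sq {v : Fin 3 → ℝ} (hv : norm3 v < 1) :
    lorentzFactor v ^ 2 = (1 - norm3 v ^ 2)⁻¹ := by
  have h : norm3 v ^ 2 < 1 := (sq_lt_one_iff₀ (norm3_nonneg v)).2 hv
  rw [lorentzFactor, div_pow, one_pow, Real.sq_sqrt (by linarith), one_div]

lemma one_sub_norm3_bloch_sq (h00 : R 0 0 = 1) :
    1 - norm3 (bloch R) ^ 2 = (R * minkowski * Rᵀ) 0 0 := by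
  simp only [mul_minkowski_mul_transpose_apply, norm3_sq, bloch, h00, one_pow, ← sq]

lemma one_sub_norm3_bloch_sq_of_gram {p : ℝ} {m : Fin 4 → ℝ} (h00 : R 0 0 = 1)
    (hgram : R * minkowski * Rᵀ = q • minkowski + p • vecMulVec m m) :
    1 - norm3 (bloch R) ^ 2 = q + p * m 0 ^ 2 := by
  rw [one_sub_norm3_bloch_sq h00, hgram]
  simp only [Matrix.add_apply, Matrix.smul_apply, minkowski_zero_zero, vecMulVec_apply,
    smul_eq_mul, mul_one, sq]

lemma ellipsoidCentre_apply (h00 : R 0 0 = 1) (i : Fin 3) :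
    ellipsoidCentre R i =
      lorentzFactor (bloch R) ^ 2 * (R * minkowski * Rᵀ) i.succ 0 := by
  simp only [mul_minkowski_mul_transpose_apply, ellipsoidCentre, bloch, h00, mul_one,
    transpose_apply]

lemma minkowski_null_iff {m : Fin 4 → ℝ} :
    m ⬝ᵥ minkowski *ᵥ m = 0 ↔ norm3 (fun i => m i.succ) = |m 0| := by
  rw [← sq_eq_sq₀ (norm3_nonneg _) (abs_nonneg _), norm3_sq, sq_abs, dotProduct_minkowski_mulVec,
    sub_eq_zero, eq_comm]
  simp only [sq]

namespace HasNullGram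

lemma norm3_bloch_lt_one (hR : HasNullGram R q) (h00 : R 0 0 = 1) (hq : 0 < q) :
    norm3 (bloch R) < 1 := by
  obtain ⟨p, hp, m, -, hgram⟩ := hR
  have hb := one_sub_norm3_bloch_sq_of_gram h00 hgram
  have hD : 0 < q + p * m 0 ^ 2 := by positivity
  exact (sq_lt_one_iff₀ (norm3_nonneg _)).1 (by linarith)

lemma one_sub_norm3_ellipsoidCentre (hR : HasNullGram R q) (h00 : R 0 0 = 1) (hq : 0 < q) :
    1 - norm3 (ellipsoidCentre R) = lorentzFactor (bloch R) ^ 2 * q := by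
  have hγ := lorentzFactor_sq (hR.norm3_bloch_lt_one h00 hq)
  obtain ⟨p, hp, m, hm, hgram⟩ := hR
  have hb := one_sub_norm3_bloch_sq_of_gram h00 hgram
  have hD : 0 < q + p * m 0 ^ 2 := by positivity
  rw [hb] at hγ
  have hcentre : ellipsoidCentre R =
      (lorentzFactor (bloch R) ^ 2 * p * m 0) • fun i : Fin 3 => m i.succ := by
    ext i
    rw [ellipsoidCentre_apply h00, hgram]
    simp only [Matrix.add_apply, Matrix.smul_apply, minkowski_succ_zero, vecMulVec_apply,
      Pi.smul_apply, smul_eq_mul]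
    ring
  have hnorm : norm3 (ellipsoidCentre R) = (q + p * m 0 ^ 2)⁻¹ * (p * m 0 ^ 2) := by
    rw [hcentre, norm3_smul, minkowski_null_iff.1 hm, ← abs_mul, mul_assoc, mul_assoc, ← sq, hγ,
      abs_of_nonneg (by positivity)]
  rw [hnorm, hγ]
  field_simp
  ring

lemma abs_det (hR : HasNullGram R q) (hq : q ≠ 0) : |R.det| = q ^ 2 := by
  obtain ⟨p, -, m, hm, hgram⟩ := hR
  have hfactor : q • minkowski + p • vecMulVec m m =
      q • (minkowski * (1 + vecMulVec ((p / q) • minkowski *ᵥ m) m)) := by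
    rw [Matrix.mul_add, Matrix.mul_one, mul_vecMulVec, mulVec_smul, mulVec_mulVec,
      minkowski_mul_self, one_mulVec, smul_vecMulVec, smul_add, smul_smul, mul_div_cancel₀ _ hq]
  have hdet := congrArg Matrix.det hgram
  rw [hfactor, det_smul, det_mul, det_mul, det_mul, det_transpose, det_minkowski,
    vecMulVec_eq Unit, det_one_add_replicateCol_mul_replicateRow, dotProduct_smul, hm,
    Fintype.card_fin] at hdet
  have hsq : R.det ^ 2 = (q ^ 2) ^ 2 := by simp at hdet; linarith
  rwa [sq_eq_sq_iff_abs_eq_abs, abs_of_nonneg (sq_nonneg q)] at hsq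

lemma mul_right (hR : HasNullGram R q) (hk : 0 ≤ k) (hΛ : Λ * minkowski * Λᵀ = k • minkowski) :
    HasNullGram (R * Λ) (k * q) := by
  obtain ⟨p, hp, m, hm, hgram⟩ := hR
  refine ⟨k * p, by positivity, m, hm, ?_⟩
  calc R * Λ * minkowski * (R * Λ)ᵀ = R * (Λ * minkowski * Λᵀ) * Rᵀ := by
        simp only [transpose_mul, Matrix.mul_assoc]
    _ = (k * q) • minkowski + (k * p) • vecMulVec m m := by
        rw [hΛ, Matrix.mul_smul, Matrix.smul_mul, hgram, smul_add, smul_smul, smul_smul]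

lemma mul_left (hR : HasNullGram R q) (hΛ : Λ * minkowski * Λᵀ = k • minkowski)
    (hΛ' : Λᵀ * minkowski * Λ = k • minkowski) : HasNullGram (Λ * R) (k * q) := by
  obtain ⟨p, hp, m, hm, hgram⟩ := hR
  refine ⟨p, hp, Λ *ᵥ m, ?_, ?_⟩
  · rw [mulVec_dotProduct_mulVec_mulVec, hΛ', smul_mulVec, dotProduct_smul, hm, smul_zero]
  · calc Λ * R * minkowski * (Λ * R)ᵀ = Λ * (R * minkowski * Rᵀ) * Λᵀ := by
          simp only [transpose_mul, Matrix.mul_assoc]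
      _ = (k * q) • minkowski + p • vecMulVec (Λ *ᵥ m) (Λ *ᵥ m) := by
          rw [hgram, Matrix.mul_add, Matrix.add_mul, Matrix.mul_smul, Matrix.smul_mul, hΛ,
            Matrix.mul_smul, Matrix.smul_mul, mul_vecMulVec, vecMulVec_mul, vecMul_transpose,
            smul_smul, mul_comm q]

lemma maximal_volume (hR : HasNullGram R q) (h00 : R 0 0 = 1) (hq : 0 < q) :
    lorentzFactor (bloch R) ^ 4 * |R.det| = (1 - norm3 (ellipsoidCentre R)) ^ 2 := by
  rw [hR.abs_det hq.ne', hR.one_sub_norm3_ellipsoidCentre h00 hq]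
  ring

lemma lorentzFactor_sq_mul_one_sub_norm3_comm (hR : HasNullGram R q) (hR' : HasNullGram Rᵀ q)
    (h00 : R 0 0 = 1) (hq : 0 < q) :
    lorentzFactor (bloch R) ^ 2 * (1 - norm3 (ellipsoidCentre Rᵀ)) =
      lorentzFactor (bloch Rᵀ) ^ 2 * (1 - norm3 (ellipsoidCentre R)) := by
  rw [hR.one_sub_norm3_ellipsoidCentre h00 hq, hR'.one_sub_norm3_ellipsoidCentre h00 hq]
  ring

end HasNullGram

end SteeringEllipsoid

section MaximalVolumeState

variable {c : ℝ}

lemma posSemidef_rhoMax (hc0 : 0 ≤ c) (hc2 : c ≤ 2) : (rhoMax c).PosSemidef := by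
  refine ((posSemidef_vecMulVec_self_star _).smul ?_).add
    ((posSemidef_vecMulVec_self_star _).smul ?_) <;>
  exact Complex.zero_le_real.2 (by linarith)

lemma Theta_rhoMax (hc1 : c ≤ 1) :
    Theta (rhoMax c) =
      !![1, 0, 0, 0; 0, √(1 - c), 0, 0; 0, 0, √(1 - c), 0; c, 0, 0, -(1 - c)] := by
  have h2 : √(2 - c) ^ 2 = 2 - c := Real.sq_sqrt (by linarith)
  have h1 : √(1 - c) ^ 2 = 1 - c := Real.sq_sqrt (by linarith)
  have hpos : 0 < √(2 - c) := Real.sqrt_pos.2 (by linarith)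
  ext μ ν
  simp only [Theta, rhoMax, of_apply, Matrix.add_mul, Matrix.smul_mul, vecMulVec_mul, trace_add,
    trace_smul, trace_vecMulVec, dotProduct, vecMul]
  fin_cases μ <;> fin_cases ν <;>
    simp [psiC, ket00, pauli, Fintype.sum_prod_type]
  all_goals field_simp
  all_goals simp only [h1, h2]
  all_goals ring

lemma hasNullGram_Theta_rhoMax (hc0 : 0 ≤ c) (hc1 : c ≤ 1) :
    HasNullGram (Theta (rhoMax c)) (1 - c) := by
  refine ⟨c, hc0, ![1, 0, 0, 1], ?_, ?_⟩
  · rw [dotProduct_minkowski_mulVec, Fin.sum_univ_three]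
    simp
  · have hs := Real.mul_self_sqrt (sub_nonneg.2 hc1)
    rw [Theta_rhoMax hc1]
    ext μ ν
    rw [mul_minkowski_mul_transpose_apply]
    fin_cases μ <;> fin_cases ν <;>
      simp [hs, minkowski, Fin.sum_univ_three]
    all_goals ring

lemma hasNullGram_Theta_rhoMax_transpose (hc0 : 0 ≤ c) (hc1 : c ≤ 1) :
    HasNullGram (Theta (rhoMax c))ᵀ (1 - c) := by
  refine ⟨(1 - c) * c, mul_nonneg (sub_nonneg.2 hc1) hc0, ![1, 0, 0, 1], ?_, ?_⟩
  · rw [dotProduct_minkowski_mulVec, Fin.sum_univ_three]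
    simp
  · have hs := Real.mul_self_sqrt (sub_nonneg.2 hc1)
    rw [Theta_rhoMax hc1]
    ext μ ν
    rw [mul_minkowski_mul_transpose_apply]
    fin_cases μ <;> fin_cases ν <;>
      simp [hs, minkowski, Fin.sum_univ_three]
    all_goals ring

end MaximalVolumeState

section BoostedMax

/-- The state obtained from `rhoMax c` by the local filter `S` on Bob's qubit. -/
def boostedMax (c : ℝ) (S : Matrix (Fin 2) (Fin 2) ℂ) :
    Matrix (Fin 2 × Fin 2) (Fin 2 × Fin 2) ℂ :=
  (pauli 0 ⊗ₖ S) * rhoMax c * (pauli 0 ⊗ₖ S)ᴴ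

variable {c : ℝ} (S : Matrix (Fin 2) (Fin 2) ℂ)

lemma posSemidef_boostedMax (hc0 : 0 ≤ c) (hc2 : c ≤ 2) : (boostedMax c S).PosSemidef :=
  (posSemidef_rhoMax hc0 hc2).mul_mul_conjTranspose_same _

lemma Theta_boostedMax : Theta (boostedMax c S) = Theta (rhoMax c) * (spinorMap S)ᵀ := by
  rw [boostedMax, Theta_kronecker_conj, pauli_zero, spinorMap_one, Matrix.one_mul]

lemma Theta_boostedMax_zero (hc1 : c ≤ 1) : Theta (boostedMax c S) 0 = pauliCoord (S * Sᴴ) := by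
  have hrow : Theta (rhoMax c) 0 = Pi.single 0 1 := by
    rw [Theta_rhoMax hc1]
    ext ν
    fin_cases ν <;> rfl
  rw [Theta_boostedMax, mul_apply_eq_vecMul, hrow, vecMul_transpose, mulVec_single_one]
  ext ν
  simp only [spinorMap, pauli_zero, Matrix.mul_one, col_apply, of_apply]

lemma hasNullGram_Theta_boostedMax (hc0 : 0 ≤ c) (hc1 : c ≤ 1) :
    HasNullGram (Theta (boostedMax c S)) (Complex.normSq S.det * (1 - c)) := by
  rw [Theta_boostedMax]
  refine (hasNullGram_Theta_rhoMax hc0 hc1).mul_right (Complex.normSq_nonneg _) ?_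
  rw [transpose_transpose, spinorMap_transpose_mul_minkowski_mul]

lemma hasNullGram_Theta_boostedMax_transpose (hc0 : 0 ≤ c) (hc1 : c ≤ 1) :
    HasNullGram (Theta (boostedMax c S))ᵀ (Complex.normSq S.det * (1 - c)) := by
  rw [Theta_boostedMax, transpose_mul, transpose_transpose]
  exact (hasNullGram_Theta_rhoMax_transpose hc0 hc1).mul_left
    (spinorMap_mul_minkowski_mul_transpose S) (spinorMap_transpose_mul_minkowski_mul S)

variable {S} {b : Fin 3 → ℝ}

lemma normSq_det_of_mul_conjTranspose (hS : S * Sᴴ = pauliVec (Fin.cons 1 b)) :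
    Complex.normSq S.det = 1 - norm3 b ^ 2 := by
  have h := congrArg Matrix.det hS
  rw [det_mul, det_conjTranspose, det_pauliVec, RCLike.star_def, Complex.mul_conj,
    dotProduct_minkowski_mulVec] at h
  simpa only [Fin.cons_zero, Fin.cons_succ, ← sq, one_pow, norm3_sq] using Complex.ofReal_inj.1 h

end BoostedMax

theorem stmt15_general (c : ℝ) (hc0 : 0 ≤ c) (hc1 : c < 1)
    (b : Fin 3 → ℝ) (hb1 : norm3 b < 1)
    (ρB : Matrix (Fin 2) (Fin 2) ℂ)
    (hρB : ρB = (1 / 2 : ℂ) • (pauli 0 + ∑ i : Fin 3, (b i : ℂ) • pauli i.succ))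
    (S : Matrix (Fin 2) (Fin 2) ℂ) (hSsq : S * Sᴴ = (2 : ℂ) • ρB)
    (ρ : Matrix (Fin 2 × Fin 2) (Fin 2 × Fin 2) ℂ)
    (hρ : ρ = (pauli 0 ⊗ₖ S) * rhoMax c * (pauli 0 ⊗ₖ S)ᴴ)
    (a : Fin 3 → ℝ) (ha : ∀ i, a i = Theta ρ i.succ 0) :
    ρ.PosSemidef ∧ ρ.trace = 1
    ∧ (∀ j, Theta ρ 0 j.succ = b j)
    ∧ norm3 a < 1
    ∧ (let γa : ℝ := 1 / Real.sqrt (1 - norm3 a ^ 2)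
       let γb : ℝ := 1 / Real.sqrt (1 - norm3 b ^ 2)
       let cA : Fin 3 → ℝ :=
         fun i => γb ^ 2 * (a i - ∑ j, Theta ρ i.succ j.succ * b j)
       let cB : Fin 3 → ℝ :=
         fun j => γa ^ 2 * (b j - ∑ i, Theta ρ i.succ j.succ * a i)
       γb ^ 2 * (1 - norm3 cB) = γa ^ 2 * (1 - norm3 cA)
       ∧ γa ^ 4 * |(Theta ρ).det| = (1 - norm3 cB) ^ 2) := by
  have hS : S * Sᴴ = pauliVec (Fin.cons 1 b) := by
    simp [hSsq, hρB, pauliVec, Fin.sum_univ_succ]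
  have hpsd : ρ.PosSemidef := hρ ▸ posSemidef_boostedMax S hc0 (by linarith)
  have hA := hasNullGram_Theta_boostedMax S hc0 hc1.le
  have hB := hasNullGram_Theta_boostedMax_transpose S hc0 hc1.le
  have hrow := Theta_boostedMax_zero S hc1.le
  rw [boostedMax, ← hρ] at hA hB hrow
  rw [hS, pauliCoord_pauliVec] at hrow
  have h00 : Theta ρ 0 0 = 1 := congrFun hrow 0
  obtain rfl : a = bloch (Theta ρ)ᵀ := funext ha
  have hb : bloch (Theta ρ) = b := funext fun j => congrFun hrow j.succ
  have hq : 0 < Complex.normSq S.det * (1 - c) := by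
    have hb2 : norm3 b ^ 2 < 1 := (sq_lt_one_iff₀ (norm3_nonneg b)).2 hb1
    rw [normSq_det_of_mul_conjTranspose hS]
    exact mul_pos (sub_pos.2 hb2) (sub_pos.2 hc1)
  refine ⟨hpsd, ?_, congrFun hb, hB.norm3_bloch_lt_one h00 hq, ?_⟩
  · rw [trace_eq_Theta hpsd.isHermitian, h00, Complex.ofReal_one]
  · rw [← hb]
    exact ⟨hA.lorentzFactor_sq_mul_one_sub_norm3_comm hB h00 hq,
      det_transpose (Theta ρ) ▸ hB.maximal_volume h00 hq⟩

/-- Boosting the maximal-volume state: `ρ = (I₂⊗S)ρ̃ᵐᵃˣ_c(I₂⊗S)` with `S` the PSD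
square root of `2ρ_B` is a state with Bob's Bloch vector `b`, Alice's Bloch vector of
norm `< 1`, the ellipsoid centres satisfy `γ_b²(1 − ‖c_B‖) = γ_a²(1 − ‖c_A‖)`, and
Bob's steering ellipsoid is also maximal volume: `γ_a⁴|det Θ(ρ)| = (1 − ‖c_B‖)²`. -/
theorem stmt15 (c : ℝ) (hc0 : 0 ≤ c) (hc1 : c < 1)
    (b : Fin 3 → ℝ) (hb1 : norm3 b < 1)
    (ρB : Matrix (Fin 2) (Fin 2) ℂ)
    (hρB : ρB = (1 / 2 : ℂ) • (pauli 0 + ∑ i : Fin 3, (b i : ℂ) • pauli i.succ))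
    (S : Matrix (Fin 2) (Fin 2) ℂ) (hS : S.PosSemidef) (hSsq : S * S = (2 : ℂ) • ρB)
    (ρ : Matrix (Fin 2 × Fin 2) (Fin 2 × Fin 2) ℂ)
    (hρ : ρ = (pauli 0 ⊗ₖ S) * rhoMax c * (pauli 0 ⊗ₖ S))
    (a : Fin 3 → ℝ) (ha : ∀ i, a i = Theta ρ i.succ 0) :
    ρ.PosSemidef ∧ ρ.trace = 1
    ∧ (∀ j, Theta ρ 0 j.succ = b j)
    ∧ norm3 a < 1
    ∧ (let γa : ℝ := 1 / Real.sqrt (1 - norm3 a ^ 2)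
       let γb : ℝ := 1 / Real.sqrt (1 - norm3 b ^ 2)
       let cA : Fin 3 → ℝ :=
         fun i => γb ^ 2 * (a i - ∑ j, Theta ρ i.succ j.succ * b j)
       let cB : Fin 3 → ℝ :=
         fun j => γa ^ 2 * (b j - ∑ i, Theta ρ i.succ j.succ * a i)
       γb ^ 2 * (1 - norm3 cB) = γa ^ 2 * (1 - norm3 cA)
       ∧ γa ^ 4 * |(Theta ρ).det| = (1 - norm3 cB) ^ 2) := by
  exact stmt15_general c hc0 hc1 b hb1 ρB hρB S (by rwa [hS.isHermitian.eq]) ρ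
    (by rwa [conjTranspose_kronecker, (isHermitian_pauli 0).eq, hS.isHermitian.eq]) a ha
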